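/- arXiv:2403.00693 — 2 statements merged into one kernel-verified Lean document; each statement's English description precedes it below -/
import Mathlib

section
/- There exists a real number a ∈ (0, 1/7) such that the iterated function system 𝒮₁(a) = {x/7, x/7 + a, x/7 + 6/7} on ℝ satisfies the weak separation property and the open set condition, but satisfies neither the convex open set condition nor the convex finite type condition. -/
open Set

/-- The IFS 𝒮₁(a) = {x/7, x/7 + a, x/7 + 6/7} on ℝ. -/
noncomputable def S1 (a : ℝ) : Fin 3 → ℝ → ℝ :=
  ![fun x => x / 7, fun x => x / 7 + a, fun x => x / 7 + 6 / 7]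

/-- For a word σ = (s₁,…,s_k), the composition S_σ = S_{s₁} ∘ ⋯ ∘ S_{s_k}. -/
noncomputable def Sw1 (a : ℝ) : List (Fin 3) → ℝ → ℝ
  | [] => id
  | i :: σ => S1 a i ∘ Sw1 a σ

/-- For words σ, τ of the same length k, S_σ⁻¹ ∘ S_τ is the translation by
`amt1 a σ τ = 7 ^ k * (S_τ(0) − S_σ(0))`. -/
noncomputable def amt1 (a : ℝ) (σ τ : List (Fin 3)) : ℝ :=
  7 ^ σ.length * (Sw1 a τ 0 - Sw1 a σ 0)

/-- The weak separation property for 𝒮₁(a): the nonzero translation amounts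
`a_{σ,τ}` over pairs of words of equal length are bounded away from 0. -/
def WSP1 (a : ℝ) : Prop :=
  ∃ ε > 0, ∀ σ τ : List (Fin 3), σ.length = τ.length →
    amt1 a σ τ ≠ 0 → ε ≤ |amt1 a σ τ|

/-- The neighbourhood type of a word σ relative to the open interval (0,1). -/
noncomputable def Ntype1 (a : ℝ) (σ : List (Fin 3)) : Set ℝ :=
  { t | ∃ τ : List (Fin 3), τ.length = σ.length ∧
      (Sw1 a σ '' Ioo 0 1 ∩ Sw1 a τ '' Ioo 0 1).Nonempty ∧ t = amt1 a σ τ }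

/-- The convex finite type condition: only finitely many neighbourhood types
relative to (0,1). -/
def FTCco1 (a : ℝ) : Prop := (Set.range (Ntype1 a)).Finite

/-- The open set condition for 𝒮₁(a). -/
def OSC1 (a : ℝ) : Prop :=
  ∃ V : Set ℝ, V.Nonempty ∧ IsOpen V ∧ (∀ i, S1 a i '' V ⊆ V) ∧
    ∀ i j, i ≠ j → S1 a i '' V ∩ S1 a j '' V = ∅

/-- The convex open set condition for 𝒮₁(a): OSC with V = (0,1). -/
def OSCco1 (a : ℝ) : Prop :=
  (∀ i, S1 a i '' Ioo 0 1 ⊆ Ioo 0 1) ∧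
    ∀ i j, i ≠ j → S1 a i '' Ioo 0 1 ∩ S1 a j '' Ioo 0 1 = ∅

/-!
Up to rescaling by powers of `7`, translation amounts evolve along words by `x ↦ 7x + δ`, where
`δ` is a difference of digits from `{0, 7a, 6}`. Outside `(-1, 1)` the modulus never comes back,
so everything is decided inside. If the modulus of the amount `7a` has an infinite orbit `s` in
`(1/2, 1)` under the two branches `7s - 6` and `6 - 7a - 7s`, then every other choice of `δ`
escapes, hence distinct words of equal length have translation amounts of modulus at least `4/7`.
This gives the weak separation property, and the open set condition because `4/7 > 1/2`. If the
orbit is moreover injective, infinitely many amounts occur in `(-1, 1)`, which violates the convex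
finite type condition.

The substitution `s = (6 + 3b) y - b / 2`, `b = 7a`, turns the two branches into the single tent
map `y ↦ |7y - 1|`, which no longer involves `a`. A point `|∑ ± 7^(-k-1)|` never leaves `[0, 1/6]`
under this map, and such an orbit is injective as soon as the point is irrational.
-/

/-! ### Translation amounts along words -/

/-- The digits of `𝒮₁(a)`, normalised so that its maps are `x ↦ (x + dᵢ) / 7`. -/
noncomputable def digit (a : ℝ) : Fin 3 → ℝ := ![0, 7 * a, 6]

section Words

variable {a : ℝ}

lemma S1_apply (a : ℝ) (i : Fin 3) (x : ℝ) : S1 a i x = (x + digit a i) / 7 := by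
  fin_cases i <;> simp [S1, digit] <;> ring

lemma digit_mem_Icc (h0 : 0 ≤ a) (h1 : a ≤ 6 / 7) (i : Fin 3) : digit a i ∈ Icc 0 6 := by
  fin_cases i
  · simp [digit]
  · exact ⟨mul_nonneg (by norm_num) h0, by simpa [digit] using (by linarith : 7 * a ≤ 6)⟩
  · simp [digit]

lemma Sw1_apply (a : ℝ) (σ : List (Fin 3)) (x : ℝ) :
    Sw1 a σ x = Sw1 a σ 0 + x / 7 ^ σ.length := by
  induction σ with
  | nil => simp [Sw1]
  | cons i σ ih =>
    simp only [Sw1, Function.comp_apply, S1_apply, List.length_cons, pow_succ]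
    rw [ih]
    ring

lemma Sw1_append (a : ℝ) (σ σ' : List (Fin 3)) : Sw1 a (σ ++ σ') = Sw1 a σ ∘ Sw1 a σ' := by
  induction σ with
  | nil => rfl
  | cons i σ ih => rw [List.cons_append, Sw1, ih, Sw1, Function.comp_assoc]

lemma isOpenMap_Sw1 (a : ℝ) (σ : List (Fin 3)) : IsOpenMap (Sw1 a σ) := by
  refine IsOpenMap.of_inverse (f' := fun y => 7 ^ σ.length * (y - Sw1 a σ 0))
    (by fun_prop) (fun y => ?_) (fun x => ?_)
  · rw [Sw1_apply]
    field_simp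
    ring
  · rw [Sw1_apply a σ x]
    field_simp
    ring

lemma mapsTo_Sw1_Ioo (h0 : 0 ≤ a) (h1 : a ≤ 6 / 7) (σ : List (Fin 3)) :
    MapsTo (Sw1 a σ) (Ioo 0 1) (Ioo 0 1) := by
  induction σ with
  | nil => exact mapsTo_id _
  | cons i σ ih =>
    refine MapsTo.comp (fun x hx => ?_) ih
    obtain ⟨hd0, hd6⟩ := digit_mem_Icc h0 h1 i
    rw [S1_apply]
    constructor <;> linarith [hx.1, hx.2]

lemma amt1_self (a : ℝ) (σ : List (Fin 3)) : amt1 a σ σ = 0 := by simp [amt1]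

lemma amt1_singleton (a : ℝ) (i j : Fin 3) : amt1 a [i] [j] = digit a j - digit a i := by
  simp only [amt1, Sw1, S1_apply, Function.comp_apply, id_eq, List.length_singleton]
  ring

lemma amt1_swap {σ τ : List (Fin 3)} (h : σ.length = τ.length) :
    amt1 a τ σ = -amt1 a σ τ := by
  rw [amt1, amt1, h]
  ring

lemma amt1_append {σ τ : List (Fin 3)} (h : σ.length = τ.length) (σ' τ' : List (Fin 3)) :
    amt1 a (σ ++ σ') (τ ++ τ') = 7 ^ σ'.length * amt1 a σ τ + amt1 a σ' τ' := by
  simp only [amt1, Sw1_append, Function.comp_apply, List.length_append, pow_add]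
  rw [Sw1_apply a σ (Sw1 a σ' 0), Sw1_apply a τ (Sw1 a τ' 0), h]
  field_simp
  ring

lemma amt1_append_singleton {σ τ : List (Fin 3)} (h : σ.length = τ.length) (i j : Fin 3) :
    amt1 a (σ ++ [i]) (τ ++ [j]) = 7 * amt1 a σ τ + (digit a j - digit a i) := by
  rw [amt1_append h, amt1_singleton, List.length_singleton, pow_one]

lemma Sw1_eq_Sw1_iff {σ τ : List (Fin 3)} (h : σ.length = τ.length) {x y : ℝ} :
    Sw1 a σ x = Sw1 a τ y ↔ x - y = amt1 a σ τ := by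
  rw [Sw1_apply, Sw1_apply a τ y, amt1, h]
  field_simp
  constructor <;> intro hxy <;> linarith

lemma Sw1_image_Ioo_inter_nonempty {σ τ : List (Fin 3)} (h : σ.length = τ.length)
    (hlt : |amt1 a σ τ| < 1) :
    (Sw1 a σ '' Ioo 0 1 ∩ Sw1 a τ '' Ioo 0 1).Nonempty := by
  obtain ⟨hl, hr⟩ := abs_lt.mp hlt
  refine ⟨Sw1 a σ ((1 + amt1 a σ τ) / 2), mem_image_of_mem _ ⟨by linarith, by linarith⟩,
    (1 - amt1 a σ τ) / 2, ⟨by linarith, by linarith⟩, ?_⟩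
  exact ((Sw1_eq_Sw1_iff h).mpr (by ring)).symm

lemma not_OSCco1 (h : |a| < 1 / 7) : ¬ OSCco1 a := by
  rintro ⟨-, hdisj⟩
  have hamt : amt1 a [0] [1] = 7 * a := by simp [amt1_singleton, digit]
  have hlt : |amt1 a [0] [1]| < 1 := by
    rw [hamt, abs_mul, abs_of_pos (by norm_num : (0 : ℝ) < 7)]
    linarith
  exact (Sw1_image_Ioo_inter_nonempty (σ := [0]) (τ := [1]) rfl hlt).ne_empty
    (hdisj 0 1 (by decide))

end Words

/-- The set of all translation amounts `a_{σ,τ}` of `𝒮₁(a)`. -/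
def translations (a : ℝ) : Set ℝ := {t | ∃ σ τ, σ.length = τ.length ∧ amt1 a σ τ = t}

section Translations

variable {a t : ℝ}

lemma neg_mem_translations (ht : t ∈ translations a) : -t ∈ translations a := by
  obtain ⟨σ, τ, h, rfl⟩ := ht
  exact ⟨τ, σ, h.symm, amt1_swap h⟩

lemma digit_sub_mem_translations (a : ℝ) (i j : Fin 3) :
    digit a j - digit a i ∈ translations a :=
  ⟨[i], [j], rfl, amt1_singleton a i j⟩

lemma seven_mul_add_mem_translations (ht : t ∈ translations a) (i j : Fin 3) :
    7 * t + (digit a j - digit a i) ∈ translations a := by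
  obtain ⟨σ, τ, h, rfl⟩ := ht
  exact ⟨σ ++ [i], τ ++ [j], by simp [h], amt1_append_singleton h i j⟩

lemma finite_Ntype1 (a : ℝ) (σ : List (Fin 3)) : (Ntype1 a σ).Finite := by
  refine ((List.finite_length_eq (Fin 3) σ.length).image (amt1 a σ)).subset ?_
  rintro _ ⟨τ, hτ, -, rfl⟩
  exact mem_image_of_mem _ hτ

lemma FTCco1.finite_translations_inter (h : FTCco1 a) :
    (translations a ∩ {t | |t| < 1}).Finite := by
  have hfin : (⋃₀ range (Ntype1 a)).Finite :=
    Finite.sUnion h (forall_mem_range.mpr (finite_Ntype1 a))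
  refine hfin.subset ?_
  rintro _ ⟨⟨σ, τ, hlen, rfl⟩, hlt⟩
  exact ⟨_, mem_range_self σ, τ, hlen.symm, Sw1_image_Ioo_inter_nonempty hlen hlt, rfl⟩

end Translations

/-! ### Uniform separation of words -/

/-- The maps of distinct words of equal length are at least `ε` apart, measured by the modulus of
the translation amount. Unlike in `WSP1`, exact overlaps `S_σ = S_τ` are excluded. -/
def WordsSeparated (a ε : ℝ) : Prop :=
  ∀ σ τ : List (Fin 3), σ.length = τ.length → σ ≠ τ → ε ≤ |amt1 a σ τ|

namespace WordsSeparated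

variable {a ε : ℝ}

lemma wsp1 (h : WordsSeparated a ε) (hε : 0 < ε) : WSP1 a := by
  refine ⟨ε, hε, fun σ τ hlen hne => h σ τ hlen ?_⟩
  rintro rfl
  exact hne (amt1_self a σ)

lemma disjoint_Sw1_image_of_length_le (h : WordsSeparated a ε) (ha0 : 0 ≤ a) (ha1 : a ≤ 6 / 7)
    {σ τ : List (Fin 3)} (hlen : σ.length ≤ τ.length) (hpre : ¬ σ <+: τ) :
    Disjoint (Sw1 a σ '' Ioo (1 - ε) ε) (Sw1 a τ '' Ioo 0 1) := by
  rw [disjoint_left]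
  rintro _ ⟨x, hx, rfl⟩ ⟨y, hy, hxy⟩
  have hlen' : σ.length = (τ.take σ.length).length := by simp [hlen]
  rw [← List.take_append_drop σ.length τ, Sw1_append] at hxy
  obtain ⟨hz0, hz1⟩ := mapsTo_Sw1_Ioo ha0 ha1 (τ.drop σ.length) hy
  have hamt := (Sw1_eq_Sw1_iff hlen').mp hxy.symm
  have hsep := h σ _ hlen' (fun heq => hpre (List.prefix_iff_eq_take.mpr heq))
  rw [← hamt] at hsep
  exact hsep.not_gt (abs_lt.mpr ⟨by linarith [hx.1], by linarith [hx.2]⟩)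

lemma disjoint_Sw1_image (h : WordsSeparated a ε) (ha0 : 0 ≤ a) (ha1 : a ≤ 6 / 7) (hε : ε ≤ 1)
    {σ τ : List (Fin 3)} (hστ : ¬ σ <+: τ) (hτσ : ¬ τ <+: σ) :
    Disjoint (Sw1 a σ '' Ioo (1 - ε) ε) (Sw1 a τ '' Ioo (1 - ε) ε) := by
  have hsub : Ioo (1 - ε) ε ⊆ Ioo 0 1 := Ioo_subset_Ioo (by linarith) hε
  rcases le_total σ.length τ.length with hlen | hlen
  · exact (h.disjoint_Sw1_image_of_length_le ha0 ha1 hlen hστ).mono_right (image_mono hsub)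
  · exact ((h.disjoint_Sw1_image_of_length_le ha0 ha1 hlen hτσ).mono_right
      (image_mono hsub)).symm

lemma osc1 (h : WordsSeparated a ε) (ha0 : 0 ≤ a) (ha1 : a ≤ 6 / 7) (hε : 1 / 2 < ε)
    (hε1 : ε ≤ 1) : OSC1 a := by
  refine ⟨⋃ σ, Sw1 a σ '' Ioo (1 - ε) ε, ?_, ?_, ?_, ?_⟩
  · exact ⟨1 / 2, mem_iUnion.mpr ⟨[], 1 / 2, ⟨by linarith, hε⟩, rfl⟩⟩
  · exact isOpen_iUnion fun σ => isOpenMap_Sw1 a σ _ isOpen_Ioo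
  · rintro i _ ⟨_, hx, rfl⟩
    obtain ⟨σ, u, hu, rfl⟩ := mem_iUnion.mp hx
    exact mem_iUnion.mpr ⟨i :: σ, u, hu, rfl⟩
  · intro i j hij
    simp only [← disjoint_iff_inter_eq_empty, image_iUnion, ← image_comp, disjoint_iUnion_left,
      disjoint_iUnion_right]
    intro τ σ
    exact h.disjoint_Sw1_image (σ := i :: σ) (τ := j :: τ) ha0 ha1 hε1
      (fun hpre => hij (List.cons_prefix_cons.mp hpre).1)
      (fun hpre => hij (List.cons_prefix_cons.mp hpre).1.symm)

end WordsSeparated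

/-! ### The orbit of the translation amount `7a` -/

/-- `s` is an infinite orbit in `(1/2, 1)` of `7a` under the branches `7s - 6` and `6 - 7a - 7s`;
its terms are the moduli of the nonzero translation amounts in `(-1, 1)`. -/
structure IsNeighbourOrbit (a : ℝ) (s : ℕ → ℝ) : Prop where
  zero : s 0 = 7 * a
  mem_Ioo : ∀ n, s n ∈ Ioo (1 / 2) 1
  succ : ∀ n, s (n + 1) = 7 * s n - 6 ∨ s (n + 1) = 6 - 7 * a - 7 * s n

section Digits

variable {a : ℝ}

lemma abs_digit_sub_le (h0 : 0 ≤ a) (h1 : a ≤ 6 / 7) (i j : Fin 3) :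
    |digit a j - digit a i| ≤ 6 := by
  obtain ⟨hi0, hi6⟩ := digit_mem_Icc h0 h1 i
  obtain ⟨hj0, hj6⟩ := digit_mem_Icc h0 h1 j
  exact abs_le.mpr ⟨by linarith, by linarith⟩

lemma abs_digit_sub_eq_or_one_le (h0 : 0 ≤ a) (h1 : a ≤ 5 / 7) {i j : Fin 3} (hij : i ≠ j) :
    |digit a j - digit a i| = 7 * a ∨ 1 ≤ |digit a j - digit a i| := by
  wlog hlt : i < j generalizing i j
  · rw [abs_sub_comm]
    exact this hij.symm (hij.lt_or_gt.resolve_left hlt)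
  have h6 : 1 ≤ 6 - 7 * a := by linarith
  fin_cases i <;> fin_cases j <;> simp at hlt
  · left
    simpa [digit] using h0
  · right
    norm_num [digit]
  · right
    simpa [digit] using h6.trans (le_abs_self _)

lemma digit_sub_eq_or_neg_le (h0 : 0 ≤ a) (i j : Fin 3) :
    digit a j - digit a i = -6 ∨ digit a j - digit a i = 7 * a - 6 ∨
      -(7 * a) ≤ digit a j - digit a i := by
  have h6 : -(7 * a) ≤ 6 := by linarith
  fin_cases i <;> fin_cases j <;> simp [digit, h0, h6]

lemma one_le_abs_seven_mul_add (h0 : 0 ≤ a) (h1 : a ≤ 6 / 7) (i j : Fin 3) {x : ℝ}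
    (hx : 1 ≤ |x|) : 1 ≤ |7 * x + (digit a j - digit a i)| := by
  have hδ := abs_digit_sub_le h0 h1 i j
  have htri := abs_sub_abs_le_abs_add (7 * x) (digit a j - digit a i)
  rw [abs_mul, abs_of_pos (by norm_num : (0 : ℝ) < 7)] at htri
  linarith

end Digits

namespace IsNeighbourOrbit

variable {a : ℝ} {s : ℕ → ℝ}

lemma param_mem_Ioo (hs : IsNeighbourOrbit a s) : a ∈ Ioo (1 / 14) (1 / 7) := by
  obtain ⟨hl, hr⟩ := hs.mem_Ioo 0
  rw [hs.zero] at hl hr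
  constructor <;> linarith

lemma four_sevenths_lt (hs : IsNeighbourOrbit a s) (n : ℕ) : 4 / 7 < s n := by
  have ha := hs.param_mem_Ioo.2
  obtain ⟨hl, hr⟩ := hs.mem_Ioo (n + 1)
  rcases hs.succ n with h | h <;> linarith

lemma abs_seven_mul_orbit_add (hs : IsNeighbourOrbit a s) (n : ℕ) (i j : Fin 3) :
    |7 * s n + (digit a j - digit a i)| = s (n + 1) ∨
      1 ≤ |7 * s n + (digit a j - digit a i)| := by
  obtain ⟨ha0, ha1⟩ := hs.param_mem_Ioo
  have hn := hs.four_sevenths_lt n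
  have hnext := (hs.mem_Ioo (n + 1)).1
  rcases digit_sub_eq_or_neg_le (by linarith : 0 ≤ a) i j with hδ | hδ | hδ
  · rw [hδ]
    rcases hs.succ n with h | h
    · left
      rw [abs_of_pos] <;> linarith
    · right
      rw [le_abs]
      right
      linarith
  · rw [hδ]
    rcases hs.succ n with h | h
    · right
      rw [le_abs]
      left
      linarith
    · left
      rw [abs_of_neg] <;> linarith
  · right
    rw [le_abs]
    left
    linarith

lemma abs_seven_mul_add (hs : IsNeighbourOrbit a s) (n : ℕ) (i j : Fin 3) {x : ℝ}
    (hx : |x| = s n) :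
    |7 * x + (digit a j - digit a i)| = s (n + 1) ∨ 1 ≤ |7 * x + (digit a j - digit a i)| := by
  rcases eq_or_eq_neg_of_abs_eq hx with rfl | rfl
  · exact hs.abs_seven_mul_orbit_add n i j
  · have hswap : 7 * -s n + (digit a j - digit a i) =
        -(7 * s n + (digit a i - digit a j)) := by ring
    rw [hswap, abs_neg]
    exact hs.abs_seven_mul_orbit_add n j i

theorem abs_amt1_eq_or_one_le (hs : IsNeighbourOrbit a s) {σ τ : List (Fin 3)}
    (hlen : σ.length = τ.length) (hne : σ ≠ τ) :
    (∃ n, |amt1 a σ τ| = s n) ∨ 1 ≤ |amt1 a σ τ| := by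
  obtain ⟨ha0, ha1⟩ := hs.param_mem_Ioo
  induction σ using List.reverseRecOn generalizing τ with
  | nil => exact absurd (List.length_eq_zero_iff.mp hlen.symm).symm hne
  | append_singleton σ i ih =>
    obtain rfl | ⟨τ, j, rfl⟩ := τ.eq_nil_or_concat'
    · simp at hlen
    have hlen' : σ.length = τ.length := by simpa using hlen
    rw [amt1_append_singleton hlen']
    by_cases heq : σ = τ
    · subst heq
      have hij : i ≠ j := fun hij => hne (by rw [hij])
      rw [amt1_self, mul_zero, zero_add]
      exact (abs_digit_sub_eq_or_one_le (by linarith) (by linarith) hij).imp_left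
        fun h => ⟨0, h.trans hs.zero.symm⟩
    · rcases ih hlen' heq with ⟨n, hn⟩ | hge
      · exact (hs.abs_seven_mul_add n i j hn).imp_left fun h => ⟨n + 1, h⟩
      · exact Or.inr (one_le_abs_seven_mul_add (by linarith) (by linarith) i j hge)

theorem wordsSeparated (hs : IsNeighbourOrbit a s) : WordsSeparated a (4 / 7) := by
  intro σ τ hlen hne
  rcases hs.abs_amt1_eq_or_one_le hlen hne with ⟨n, hn⟩ | hge
  · exact hn ▸ (hs.four_sevenths_lt n).le
  · linarith

lemma mem_translations (hs : IsNeighbourOrbit a s) (n : ℕ) : s n ∈ translations a := by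
  induction n with
  | zero =>
    have h := digit_sub_mem_translations a 0 1
    simpa [digit, hs.zero] using h
  | succ n ih =>
    rcases hs.succ n with h | h
    · convert seven_mul_add_mem_translations ih 2 0 using 1
      simp [digit, h, sub_eq_add_neg]
    · convert seven_mul_add_mem_translations (neg_mem_translations ih) 1 2 using 1
      simp only [h, digit, Matrix.cons_val_one, Matrix.cons_val]
      ring

theorem not_FTCco1 (hs : IsNeighbourOrbit a s) (hinj : Function.Injective s) : ¬ FTCco1 a := by
  intro h
  refine infinite_range_of_injective hinj (h.finite_translations_inter.subset ?_)
  rintro _ ⟨n, rfl⟩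
  obtain ⟨hl, hr⟩ := hs.mem_Ioo n
  exact ⟨hs.mem_translations n, abs_lt.mpr ⟨by linarith, hr⟩⟩

end IsNeighbourOrbit

/-! ### Bounded orbits of the tent map -/

/-- `y` is an orbit of the tent map `y ↦ |r y - 1|`. -/
def IsTentOrbit (r : ℝ) (y : ℕ → ℝ) : Prop := ∀ n, y (n + 1) = |r * y n - 1|

namespace IsTentOrbit

variable {m : ℕ} {y : ℕ → ℝ}

lemma exists_int_affine (hy : IsTentOrbit m y) (n k : ℕ) :
    ∃ p q : ℤ, |q| = m ^ k ∧ y (n + k) = q * y n + p := by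
  induction k with
  | zero => exact ⟨0, 1, by simp, by simp⟩
  | succ k ih =>
    obtain ⟨p, q, hq, hk⟩ := ih
    have hq' : |m * q| = (m : ℤ) ^ (k + 1) := by
      rw [abs_mul, hq, Nat.abs_cast, pow_succ']
    rw [← add_assoc, hy, hk]
    rcases abs_choice (m * (q * y n + p) - 1) with h | h <;> rw [h]
    · exact ⟨m * p - 1, m * q, hq', by push_cast; ring⟩
    · exact ⟨1 - m * p, -(m * q), by rwa [abs_neg], by push_cast; ring⟩

lemma irrational (hy : IsTentOrbit m y) (hm : m ≠ 0) (h0 : Irrational (y 0)) (n : ℕ) :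
    Irrational (y n) := by
  obtain ⟨p, q, hq, hn⟩ := hy.exists_int_affine 0 n
  have hq0 : q ≠ 0 := by
    rw [← abs_pos, hq]
    positivity
  rw [zero_add] at hn
  exact hn ▸ (h0.intCast_mul hq0).add_intCast p

lemma injective (hy : IsTentOrbit m y) (hm : 2 ≤ m) (h0 : Irrational (y 0)) :
    Function.Injective y := by
  refine Function.Injective.of_lt_imp_ne fun i j hij heq => ?_
  obtain ⟨k, rfl⟩ := Nat.exists_eq_add_of_lt hij
  obtain ⟨p, q, hq, hk⟩ := hy.exists_int_affine i (k + 1)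
  have hq1 : 1 - q ≠ 0 := by
    rw [sub_ne_zero]
    rintro rfl
    have hpow : (1 : ℤ) < m ^ (k + 1) := one_lt_pow₀ (by exact_mod_cast hm) k.succ_ne_zero
    exact hpow.ne (abs_one.symm.trans hq)
  refine ((hy.irrational (by omega) h0 i).intCast_mul hq1).ne_int p ?_
  rw [add_assoc, hk] at heq
  push_cast
  linarith

end IsTentOrbit

lemma exists_irrational_of_injective {α : Type*} [Uncountable α] {g : α → ℝ}
    (hg : Function.Injective g) : ∃ x, Irrational (g x) := by
  by_contra! hrat
  simp only [Irrational, not_not] at hrat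
  choose q hq using hrat
  have hqinj : Function.Injective q := fun x y h => hg (by rw [← hq, ← hq, h])
  exact not_countable hqinj.countable

lemma uncountable_nat_to_bool : Uncountable (ℕ → Bool) := by
  rw [← Cardinal.aleph0_lt_mk_iff]
  simpa using Cardinal.aleph0_lt_continuum

lemma cantorFunction_mem_Icc {c : ℝ} (h0 : 0 ≤ c) (h1 : c < 1) (f : ℕ → Bool) :
    Cardinal.cantorFunction c f ∈ Icc 0 (1 - c)⁻¹ := by
  refine ⟨tsum_nonneg fun n => Cardinal.cantorFunctionAux_nonneg h0, ?_⟩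
  rw [← tsum_geometric_of_lt_one h0 h1]
  simpa [Cardinal.cantorFunction] using
    Cardinal.cantorFunction_le (f := f) (g := fun _ => true) h0 h1 fun _ _ => rfl

/-- The number `∑ₖ ± r^(-k-1)`, where the `k`-th sign is positive exactly when `f k = true`. -/
noncomputable def signedExpansion (r : ℝ) (f : ℕ → Bool) : ℝ :=
  r⁻¹ * (2 * Cardinal.cantorFunction r⁻¹ f - (1 - r⁻¹)⁻¹)

section SignedExpansion

variable {r : ℝ}

lemma signedExpansion_injective (hr : 2 < r) : Function.Injective (signedExpansion r) := by
  intro f g h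
  have hr0 : r⁻¹ ≠ 0 := by positivity
  have hr2 : r⁻¹ < 1 / 2 := by
    rw [one_div]
    exact inv_strictAnti₀ two_pos hr
  refine Cardinal.cantorFunction_injective (by positivity) hr2 ?_
  have hsub := mul_left_cancel₀ hr0 h
  linarith

lemma abs_signedExpansion_le (hr : 1 < r) (f : ℕ → Bool) :
    |signedExpansion r f| ≤ (r - 1)⁻¹ := by
  have hc1 : r⁻¹ < 1 := inv_lt_one_of_one_lt₀ hr
  obtain ⟨hl, hu⟩ := cantorFunction_mem_Icc (by positivity) hc1 f
  have hinv : (r - 1)⁻¹ = r⁻¹ * (1 - r⁻¹)⁻¹ := by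
    rw [← mul_inv]
    congr 1
    field_simp
  rw [signedExpansion, hinv, abs_mul, abs_of_pos (by positivity : 0 < r⁻¹)]
  gcongr
  exact abs_le.mpr ⟨by linarith, by linarith⟩

lemma signedExpansion_tail (hr : 1 < r) (f : ℕ → Bool) :
    signedExpansion r (fun k => f (k + 1)) =
      r * signedExpansion r f - if f 0 then 1 else -1 := by
  have hc1 : r⁻¹ < 1 := inv_lt_one_of_one_lt₀ hr
  have hr1 : r - 1 ≠ 0 := by linarith
  rw [signedExpansion, signedExpansion, Cardinal.cantorFunction_succ f (by positivity) hc1]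
  cases f 0 <;> simp <;> field_simp <;> ring

lemma abs_signedExpansion_tail (hr : 2 ≤ r) (f : ℕ → Bool) :
    |signedExpansion r (fun k => f (k + 1))| = |r * |signedExpansion r f| - 1| := by
  have hr0 : 0 < r := by linarith
  have htail := signedExpansion_tail (by linarith) f
  have hle : |signedExpansion r (fun k => f (k + 1))| ≤ 1 :=
    (abs_signedExpansion_le (by linarith) _).trans (inv_le_one_of_one_le₀ (by linarith))
  obtain ⟨hl, hu⟩ := abs_le.mp hle
  cases h : f 0
  · have htail' : signedExpansion r (fun k => f (k + 1)) = r * signedExpansion r f + 1 := by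
      simp [htail, h]
    have hX : signedExpansion r f ≤ 0 :=
      nonpos_of_mul_nonpos_right (by linarith) hr0
    rw [htail', abs_of_nonpos hX, ← abs_neg, neg_add, mul_neg, sub_eq_add_neg]
  · have htail' : signedExpansion r (fun k => f (k + 1)) = r * signedExpansion r f - 1 := by
      simp [htail, h]
    have hX : 0 ≤ signedExpansion r f :=
      (mul_nonneg_iff_of_pos_left hr0).mp (by linarith)
    rw [htail', abs_of_nonneg hX]

theorem exists_irrational_isTentOrbit (hr : 2 < r) :
    ∃ y, IsTentOrbit r y ∧ Irrational (y 0) ∧ ∀ n, y n ≤ (r - 1)⁻¹ := by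
  have := uncountable_nat_to_bool
  obtain ⟨f, hf⟩ := exists_irrational_of_injective (signedExpansion_injective hr)
  refine ⟨fun n => |signedExpansion r fun k => f (k + n)|, fun n => ?_, ?_,
    fun n => abs_signedExpansion_le (by linarith) _⟩
  · rw [← abs_signedExpansion_tail hr.le]
    simp only [add_right_comm, add_assoc]
  · rcases abs_choice (signedExpansion r f) with h | h
    · simpa [h] using hf
    · simpa [h] using hf.neg

end SignedExpansion

/-! ### The choice of the parameter -/

lemma isNeighbourOrbit_of_isTentOrbit {y : ℕ → ℝ} (hy : IsTentOrbit 7 y)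
    (hlt : ∀ n, y n < 1 / 6) {b : ℝ} (hb : b = (6 + 3 * b) * y 0 - b / 2) :
    IsNeighbourOrbit (b / 7) fun n => (6 + 3 * b) * y n - b / 2 := by
  have hgt : ∀ n, 5 / 42 < y n := fun n => by
    have h := hlt (n + 1)
    rw [hy] at h
    linarith [(abs_lt.mp h).1]
  have hb0 : 0 < b := by nlinarith [hlt 0, hgt 0]
  have hb1 : b < 1 := by nlinarith [hlt 0]
  refine ⟨by linarith, fun n => ⟨?_, ?_⟩, fun n => ?_⟩
  · nlinarith [hgt n]
  · nlinarith [hlt n]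
  · rw [hy]
    rcases abs_choice (7 * y n - 1) with h | h <;> rw [h]
    · exact Or.inl (by ring)
    · exact Or.inr (by ring)

theorem exists_injective_isNeighbourOrbit :
    ∃ a s, IsNeighbourOrbit a s ∧ Function.Injective s := by
  obtain ⟨y, hy, hirr, hle⟩ := exists_irrational_isTentOrbit (r := 7) (by norm_num)
  have hy7 : IsTentOrbit (7 : ℕ) y := mod_cast hy
  have hlt : ∀ n, y n < 1 / 6 := fun n => by
    refine lt_of_le_of_ne ((hle n).trans_eq (by norm_num)) fun heq => ?_
    exact (hy7.irrational (by norm_num) hirr n).ne_rat (1 / 6) (by simpa using heq)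
  obtain ⟨b, hb⟩ : ∃ b, b = 4 * y 0 / (1 - 2 * y 0) := ⟨_, rfl⟩
  have hden : 0 < 1 - 2 * y 0 := by linarith [hlt 0]
  have hfix : b = (6 + 3 * b) * y 0 - b / 2 := by
    rw [eq_div_iff hden.ne'] at hb
    linarith
  have horb := isNeighbourOrbit_of_isTentOrbit hy hlt hfix
  refine ⟨b / 7, _, horb, fun m n hmn => ?_⟩
  have hcoef : 6 + 3 * b ≠ 0 := by linarith [horb.param_mem_Ioo.1]
  exact hy7.injective (by norm_num) hirr (mul_left_cancel₀ hcoef (sub_left_injective hmn))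

theorem stmt1 : ∃ a ∈ Ioo (0 : ℝ) (1 / 7),
    WSP1 a ∧ OSC1 a ∧ ¬ OSCco1 a ∧ ¬ FTCco1 a := by
  obtain ⟨a, s, hs, hinj⟩ := exists_injective_isNeighbourOrbit
  obtain ⟨ha0, ha1⟩ := hs.param_mem_Ioo
  refine ⟨a, ⟨by linarith, ha1⟩, ?_, ?_, ?_, hs.not_FTCco1 hinj⟩
  · exact hs.wordsSeparated.wsp1 (by norm_num)
  · exact hs.wordsSeparated.osc1 (by linarith) (by linarith) (by norm_num) (by norm_num)
  · exact not_OSCco1 (abs_lt.mpr ⟨by linarith, ha1⟩)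
end

section
/- For every real number a ∈ (0, 15/256], the attractor K of the iterated function system 𝒮₂(a) = {x/16, x/16 + a, x/16 + 15/16 − 16a, x/16 + 11/16, x/16 + 15/16} satisfies {0, 1} ⊆ K ⊆ [0, 1] and K ≠ [0, 1]. -/
open Set

/-- The IFS 𝒮₂(a) = {x/16, x/16 + a, x/16 + 15/16 − 16a, x/16 + 11/16, x/16 + 15/16}. -/
noncomputable def S2 (a : ℝ) : Fin 5 → ℝ → ℝ :=
  ![fun x => x / 16, fun x => x / 16 + a, fun x => x / 16 + 15 / 16 - 16 * a,
    fun x => x / 16 + 11 / 16, fun x => x / 16 + 15 / 16]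

/-- For a word σ = (s₁,…,s_k), the composition S_σ = S_{s₁} ∘ ⋯ ∘ S_{s_k}. -/
noncomputable def Sw2 (a : ℝ) : List (Fin 5) → ℝ → ℝ
  | [] => id
  | i :: σ => S2 a i ∘ Sw2 a σ

/-- For words σ, τ of the same length k, S_σ⁻¹ ∘ S_τ is the translation by
`amt2 a σ τ = 16 ^ k * (S_τ(0) − S_σ(0))`. -/
noncomputable def amt2 (a : ℝ) (σ τ : List (Fin 5)) : ℝ :=
  16 ^ σ.length * (Sw2 a τ 0 - Sw2 a σ 0)

/-- The weak separation property for 𝒮₂(a). -/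
def WSP2 (a : ℝ) : Prop :=
  ∃ ε > 0, ∀ σ τ : List (Fin 5), σ.length = τ.length →
    amt2 a σ τ ≠ 0 → ε ≤ |amt2 a σ τ|

/-- The neighbourhood type of a word σ relative to an open set V. -/
noncomputable def Ntype2 (a : ℝ) (V : Set ℝ) (σ : List (Fin 5)) : Set ℝ :=
  { t | ∃ τ : List (Fin 5), τ.length = σ.length ∧
      (Sw2 a σ '' V ∩ Sw2 a τ '' V).Nonempty ∧ t = amt2 a σ τ }

/-- The open set condition for 𝒮₂(a). -/
def OSC2 (a : ℝ) : Prop :=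
  ∃ V : Set ℝ, V.Nonempty ∧ IsOpen V ∧ (∀ i, S2 a i '' V ⊆ V) ∧
    ∀ i j, i ≠ j → S2 a i '' V ∩ S2 a j '' V = ∅

/-- The convex open set condition for 𝒮₂(a): OSC with V = (0,1). -/
def OSCco2 (a : ℝ) : Prop :=
  (∀ i, S2 a i '' Ioo 0 1 ⊆ Ioo 0 1) ∧
    ∀ i j, i ≠ j → S2 a i '' Ioo 0 1 ∩ S2 a j '' Ioo 0 1 = ∅

/-- The finite type condition for 𝒮₂(a): some nonempty open invariant V admits only
finitely many neighbourhood types. -/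
def FTC2 (a : ℝ) : Prop :=
  ∃ V : Set ℝ, V.Nonempty ∧ IsOpen V ∧ (∀ i, S2 a i '' V ⊆ V) ∧
    (Set.range (Ntype2 a V)).Finite

/-- The convex finite type condition for 𝒮₂(a): finitely many neighbourhood types
relative to (0,1). -/
def FTCco2 (a : ℝ) : Prop := (Set.range (Ntype2 a (Ioo 0 1))).Finite

/-! A compact set covered by its images under contractions lies in every nonempty closed set that
the contractions preserve, because its maximal distance to that set is at most a proper fraction of
itself. Under the maps of the IFS, `{0, 1}` is covered by its images and `K` is preserved, so
`{0, 1} ⊆ K`; likewise `K` is covered by its images and `[0, 1]` is preserved, so `K ⊆ [0, 1]`.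
Finally, `K` is covered by five copies of itself scaled by `1 / 16`, so it has length zero. -/

section SelfCoveredSets

open MeasureTheory Metric
open scoped ENNReal NNReal

theorem infDist_map_le_mul {X : Type*} [PseudoMetricSpace X] {f : X → X} {c : ℝ≥0} {F : Set X}
    (hf : LipschitzWith c f) (hF : MapsTo f F F) (x : X) :
    infDist (f x) F ≤ c * infDist x F := by
  rcases F.eq_empty_or_nonempty with rfl | hne
  · simp only [infDist_empty, mul_zero, le_refl]
  have : Nonempty F := hne.to_subtype
  rw [infDist_eq_iInf (x := x), Real.mul_iInf_of_nonneg c.coe_nonneg]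
  exact le_ciInf fun p ↦
    (infDist_le_dist_of_mem (hF p.2)).trans (hf.dist_le_mul x p)

theorem subset_of_subset_iUnion_image {X ι : Type*} [MetricSpace X]
    {f : ι → X → X} {c : ι → ℝ≥0} (hf : ∀ i, ContractingWith (c i) (f i)) {E F : Set X}
    (hEc : IsCompact E) (hE : E ⊆ ⋃ i, f i '' E)
    (hFc : IsClosed F) (hFne : F.Nonempty) (hF : ∀ i, MapsTo (f i) F F) : E ⊆ F := by
  rcases E.eq_empty_or_nonempty with rfl | hEne
  · exact empty_subset F
  obtain ⟨x, hxE, hx⟩ := hEc.exists_isMaxOn hEne (continuous_infDist_pt F).continuousOn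
  obtain ⟨i, y, hyE, rfl⟩ := mem_iUnion.1 (hE hxE)
  have hself : infDist (f i y) F ≤ c i * infDist (f i y) F :=
    (infDist_map_le_mul (hf i).toLipschitzWith (hF i) y).trans
      (mul_le_mul_of_nonneg_left (hx hyE) (c i).coe_nonneg)
  have hmax : infDist (f i y) F ≤ 0 := by
    by_contra! hpos
    exact (mul_lt_of_lt_one_left hpos (NNReal.coe_lt_one.2 (hf i).1)).not_ge hself
  intro z hz
  exact (hFc.mem_iff_infDist_zero hFne).2 (le_antisymm ((hx hz).trans hmax) infDist_nonneg)

theorem hausdorffMeasure_eq_zero_of_subset_iUnion_image {X ι : Type*} [EMetricSpace X]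
    [MeasurableSpace X] [BorelSpace X] [Countable ι] {f : ι → X → X} {c : ι → ℝ≥0}
    (hf : ∀ i, LipschitzWith (c i) (f i)) {d : ℝ} (hd : 0 ≤ d)
    (hc : ∑' i, (c i : ℝ≥0∞) ^ d < 1) {E : Set X} (hE : E ⊆ ⋃ i, f i '' E)
    (hfin : μH[d] E ≠ ∞) : μH[d] E = 0 := by
  have hself : μH[d] E ≤ (∑' i, (c i : ℝ≥0∞) ^ d) * μH[d] E :=
    calc μH[d] E ≤ ∑' i, μH[d] (f i '' E) :=
          (measure_mono hE).trans (measure_iUnion_le _)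
      _ ≤ ∑' i, (c i : ℝ≥0∞) ^ d * μH[d] E :=
          ENNReal.tsum_le_tsum fun i ↦ (hf i).hausdorffMeasure_image_le hd E
      _ = (∑' i, (c i : ℝ≥0∞) ^ d) * μH[d] E := ENNReal.tsum_mul_right
  by_contra hpos
  exact hself.not_gt <| by simpa only [one_mul] using ENNReal.mul_lt_mul_left hpos hfin hc

end SelfCoveredSets

section S2

open MeasureTheory
open scoped ENNReal NNReal

theorem S2_eq_div_add (a : ℝ) (i : Fin 5) (x : ℝ) : S2 a i x = x / 16 + S2 a i 0 := by
  fin_cases i <;> simp [S2, add_sub_assoc]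

theorem contractingWith_S2 (a : ℝ) (i : Fin 5) : ContractingWith 16⁻¹ (S2 a i) := by
  refine ⟨inv_lt_one_of_one_lt₀ (by norm_num), .of_dist_le_mul fun x y ↦ le_of_eq ?_⟩
  rw [S2_eq_div_add a i x, S2_eq_div_add a i y, dist_add_right, div_eq_inv_mul, div_eq_inv_mul,
    ← smul_eq_mul, ← smul_eq_mul, dist_smul₀]
  norm_num

theorem S2_zero_mem_Icc {a : ℝ} (ha : a ∈ Icc 0 (15 / 256)) (i : Fin 5) :
    S2 a i 0 ∈ Icc 0 (15 / 16) := by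
  obtain ⟨ha0, ha1⟩ := ha
  fin_cases i <;> constructor <;> simp [S2] <;> linarith

theorem mapsTo_S2_Icc {a : ℝ} (ha : a ∈ Icc 0 (15 / 256)) (i : Fin 5) :
    MapsTo (S2 a i) (Icc 0 1) (Icc 0 1) := by
  rintro x ⟨hx0, hx1⟩
  obtain ⟨h0, h1⟩ := S2_zero_mem_Icc ha i
  rw [S2_eq_div_add]
  constructor <;> linarith

theorem pair_subset_iUnion_S2_image (a : ℝ) : ({0, 1} : Set ℝ) ⊆ ⋃ i, S2 a i '' {0, 1} := by
  rintro x (rfl | rfl)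
  · exact mem_iUnion.2 ⟨0, 0, mem_insert 0 {1}, zero_div 16⟩
  · exact mem_iUnion.2 ⟨4, 1, mem_insert_of_mem 0 rfl, (by norm_num : (1 : ℝ) / 16 + 15 / 16 = 1)⟩

theorem volume_eq_zero_of_subset_iUnion_S2_image {a : ℝ} {E : Set ℝ}
    (hE : E ⊆ ⋃ i, S2 a i '' E) (hfin : volume E ≠ ∞) : volume E = 0 := by
  rw [← hausdorffMeasure_real] at hfin ⊢
  refine hausdorffMeasure_eq_zero_of_subset_iUnion_image
    (fun i ↦ (contractingWith_S2 a i).toLipschitzWith) zero_le_one ?_ hE hfin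
  calc ∑' _i : Fin 5, ((16⁻¹ : ℝ≥0) : ℝ≥0∞) ^ (1 : ℝ) = ((5 / 16 : ℝ≥0) : ℝ≥0∞) := by
        simp [div_eq_mul_inv]
    _ < 1 := by
        norm_cast
        norm_num

end S2

theorem stmt13 : ∀ a ∈ Ioc (0 : ℝ) (15 / 256),
    ∀ K : Set ℝ, K.Nonempty → IsCompact K → K = ⋃ i, S2 a i '' K →
      ({0, 1} : Set ℝ) ⊆ K ∧ K ⊆ Icc 0 1 ∧ K ≠ Icc 0 1 := by
  intro a ha K hne hK hself
  have hcover : K ⊆ ⋃ i, S2 a i '' K := hself.subset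
  have hmaps (i : Fin 5) : MapsTo (S2 a i) K K :=
    mapsTo_iff_image_subset.2 ((subset_iUnion _ i).trans hself.superset)
  refine ⟨?_, ?_, ?_⟩
  · exact subset_of_subset_iUnion_image (contractingWith_S2 a) (toFinite {0, 1}).isCompact
      (pair_subset_iUnion_S2_image a) hK.isClosed hne hmaps
  · exact subset_of_subset_iUnion_image (contractingWith_S2 a) hK hcover isClosed_Icc
      (nonempty_Icc.2 zero_le_one) (mapsTo_S2_Icc (Ioc_subset_Icc_self ha))
  · rintro rfl
    simpa using volume_eq_zero_of_subset_iUnion_S2_image hcover hK.measure_ne_top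
end
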